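/- arXiv:2405.16814 — 2 statements merged into one kernel-verified Lean document; each statement's English description precedes it below -/
import Mathlib

section
/- For every natural number r ≥ 1, the series ∑_{n=1}^∞ (1/(4^n · α^{rn} · L_r^n)) · binom(2n,n) · (H_{2n} − H_n) equals −(√(α^r L_r)/√(α^r L_r − 1)) · ln((√(α^r L_r) + √(α^r L_r − 1))/(2√(α^r L_r))). -/
/-!
The theorem is the evaluation at `x = 1 / (α ^ r * L_r) ∈ (0, 1)` of the generating function
`F x = ∑ aₙ (H₂ₙ - Hₙ) xⁿ`, where `aₙ = binom(2n, n) / 4ⁿ`, namely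
`√(1 - x) * F x = -log ((1 + √(1 - x)) / 2)` (`tsum_harmonic`).

The recurrence `2 (n + 1) aₙ₊₁ = (2n + 1) aₙ` says that `A x = ∑ aₙ xⁿ` satisfies
`2 (1 - x) A' = A`, whence `√(1 - x) * A x = 1` (`tsum_aa`). Since
`H₂ₙ₊₂ - Hₙ₊₁ = H₂ₙ - Hₙ + 1 / ((2n + 1) (2n + 2))`, the function `F` satisfies the same equation
with the source term `D x = ∑ aₙ xⁿ / (2n + 2)`. The coefficients of `D` telescope,
`aₙ / (2n + 2) = aₙ - aₙ₊₁`, so `x D x = 1 - (1 - x) A x = 1 - √(1 - x)` and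
`D x = 1 / (1 + √(1 - x))` (`tsum_source`). Therefore
`(√(1 - x) F)' = 1 / (2 √(1 - x) (1 + √(1 - x)))`, which is also the derivative of
`-log ((1 + √(1 - x)) / 2)`; both sides vanish at `0`.
-/

open Real

/-- The `n`-th harmonic number `H n = ∑_{k=1}^n 1/k`. -/
noncomputable def H (n : ℕ) : ℝ := ∑ k ∈ Finset.range n, 1 / (k + 1 : ℝ)

/-- The golden ratio `α = (1 + √5)/2`. -/
noncomputable def α : ℝ := (1 + Real.sqrt 5) / 2

/-- The Lucas numbers: `L 0 = 2`, `L 1 = 1`, `L (n+2) = L (n+1) + L n`. -/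
def lucas : ℕ → ℕ
  | 0 => 2
  | 1 => 1
  | n + 2 => lucas (n + 1) + lucas n

/-- The normalized central binomial coefficient `binom(2n, n) / 4ⁿ`. -/
noncomputable def aa (n : ℕ) : ℝ := (Nat.centralBinom n : ℝ) / 4 ^ n

/-- The coefficient `binom(2n, n) / 4ⁿ * (H₂ₙ - Hₙ)` of the generating function. -/
noncomputable def cc (n : ℕ) : ℝ := aa n * (H (2 * n) - H n)

lemma lucas_pos : ∀ n, 1 ≤ lucas n
  | 0 => by simp [lucas]
  | 1 => by simp [lucas]
  | n + 2 => by
    have := lucas_pos n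
    simp only [lucas]
    omega

lemma aa_zero : aa 0 = 1 := by simp [aa]

lemma aa_succ (n : ℕ) : 2 * (n + 1 : ℝ) * aa (n + 1) = (2 * n + 1) * aa n := by
  have h : ((n : ℝ) + 1) * (Nat.centralBinom (n + 1) : ℝ)
      = 2 * (2 * n + 1) * Nat.centralBinom n := by
    exact_mod_cast Nat.succ_mul_centralBinom_succ n
  unfold aa
  rw [pow_succ]
  field_simp
  linear_combination 2 * h

lemma aa_nonneg (n : ℕ) : 0 ≤ aa n := by unfold aa; positivity

lemma aa_le_one (n : ℕ) : aa n ≤ 1 := by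
  induction n with
  | zero => simp [aa]
  | succ n ih =>
    have h := aa_succ n
    have h0 := aa_nonneg n
    have hn : (0 : ℝ) < n + 1 := by positivity
    by_contra! hc
    nlinarith

lemma abs_aa_le (n : ℕ) : |aa n| ≤ 1 := by
  rw [abs_of_nonneg (aa_nonneg n)]; exact aa_le_one n

lemma hdiff_succ (n : ℕ) :
    H (2 * (n + 1)) - H (n + 1) = H (2 * n) - H n + 1 / ((2 * n + 1) * (2 * n + 2)) := by
  have e : 2 * (n + 1) = 2 * n + 1 + 1 := by ring
  rw [e]
  unfold H
  rw [Finset.sum_range_succ, Finset.sum_range_succ, Finset.sum_range_succ]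
  push_cast
  have h1 : (2 * (n : ℝ) + 1) ≠ 0 := by positivity
  have h2 : (2 * (n : ℝ) + 1 + 1) ≠ 0 := by positivity
  have h3 : (2 * (n : ℝ) + 2) ≠ 0 := by positivity
  have h4 : ((n : ℝ) + 1) ≠ 0 := by positivity
  field_simp
  ring

lemma cc_succ (n : ℕ) :
    2 * (n + 1 : ℝ) * cc (n + 1) = (2 * n + 1) * cc n + aa n / (2 * n + 2) := by
  have h := aa_succ n
  unfold cc
  rw [hdiff_succ, ← mul_assoc, h]
  have h1 : (2 * (n : ℝ) + 1) ≠ 0 := by positivity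
  have h3 : (2 * (n : ℝ) + 2) ≠ 0 := by positivity
  field_simp

lemma hdiff_nonneg (n : ℕ) : 0 ≤ H (2 * n) - H n := by
  induction n with
  | zero => simp
  | succ n ih => rw [hdiff_succ]; positivity

/-- The stronger bound `1 - 1 / (n + 1)` is what goes through by induction. -/
lemma hdiff_le (n : ℕ) : H (2 * n) - H n ≤ 1 - 1 / (n + 1) := by
  induction n with
  | zero => simp
  | succ n ih =>
    rw [hdiff_succ]
    have h : 1 / ((2 * (n : ℝ) + 1) * (2 * n + 2)) ≤ 1 / ((n + 1) * (n + 2)) := by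
      apply one_div_le_one_div_of_le (by positivity)
      have : (0 : ℝ) ≤ n := by positivity
      nlinarith
    have h2 : 1 / (((n : ℝ) + 1) * (n + 2)) = 1 / (n + 1) - 1 / (n + 2) := by
      field_simp
      ring
    have h3 : ((n + 1 : ℕ) : ℝ) + 1 = n + 2 := by push_cast; ring
    rw [h3]
    linarith

lemma abs_cc_le (n : ℕ) : |cc n| ≤ 1 := by
  have h1 := hdiff_nonneg n
  have h2 := hdiff_le n
  have h3 : (0 : ℝ) ≤ 1 / (n + 1) := by positivity
  unfold cc
  rw [abs_mul, abs_of_nonneg h1]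
  exact mul_le_one₀ (abs_aa_le n) h1 (by linarith)

lemma HasSum.congr_fun' {f g : ℕ → ℝ} {s : ℝ} (h : HasSum f s) (e : ∀ n, g n = f n) :
    HasSum g s := by
  rwa [funext e]

lemma summable_ps {c : ℕ → ℝ} (hc : ∀ n, |c n| ≤ 1) {x : ℝ} (hx : |x| < 1) :
    Summable fun n => c n * x ^ n := by
  refine Summable.of_norm_bounded (summable_geometric_of_lt_one (abs_nonneg x) hx) fun n => ?_
  rw [Real.norm_eq_abs, abs_mul, abs_pow]
  exact mul_le_of_le_one_left (by positivity) (hc n)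

/-- Termwise differentiation of a power series with bounded coefficients, with the derivative `d`
given by its own expansion as well as by that of `x * d`. -/
lemma hasDerivAt_ps {c : ℕ → ℝ} (hc : ∀ n, |c n| ≤ 1) {x : ℝ} (hx : |x| < 1) :
    ∃ d, HasDerivAt (fun z => ∑' n, c n * z ^ n) d x ∧
      HasSum (fun n : ℕ => (n + 1 : ℝ) * c (n + 1) * x ^ n) d ∧
      HasSum (fun n : ℕ => (n : ℝ) * c n * x ^ n) (x * d) := by
  obtain ⟨ρ, hxρ, hρ⟩ := exists_between hx
  have hρ0 : 0 < ρ := (abs_nonneg x).trans_lt hxρ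
  have hu : Summable fun n : ℕ => (n : ℝ) * ρ ^ (n - 1) := by
    have h := summable_pow_mul_geometric_of_norm_lt_one 1
      (show ‖ρ‖ < 1 by rwa [Real.norm_eq_abs, abs_of_pos hρ0])
    refine (h.mul_left ρ⁻¹).congr fun n => ?_
    cases n with
    | zero => simp
    | succ n => rw [Nat.add_sub_cancel, pow_succ]; field_simp; ring
  have hbound : ∀ (n : ℕ) (z : ℝ), z ∈ Metric.ball (0 : ℝ) ρ →
      ‖c n * (n * z ^ (n - 1))‖ ≤ n * ρ ^ (n - 1) := by
    intro n z hz
    have hz' : |z| ≤ ρ := by simpa using (Metric.mem_ball.1 hz).le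
    rw [Real.norm_eq_abs, abs_mul, abs_mul, abs_pow, Nat.abs_cast]
    refine (mul_le_of_le_one_left (by positivity) (hc n)).trans ?_
    gcongr
  have hxb : x ∈ Metric.ball (0 : ℝ) ρ := by simpa using hxρ
  have hd := hasDerivAt_tsum_of_isPreconnected (g := fun n z => c n * z ^ n)
    (g' := fun n z => c n * (n * z ^ (n - 1))) hu Metric.isOpen_ball
    (convex_ball (0 : ℝ) ρ).isPreconnected
    (fun n z _ => (hasDerivAt_pow n z).const_mul (c n)) hbound hxb (summable_ps hc hx) hxb
  have hsum : HasSum (fun n => c n * (n * x ^ (n - 1))) (∑' n, c n * (n * x ^ (n - 1))) :=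
    (Summable.of_norm_bounded hu fun n => hbound n x hxb).hasSum
  refine ⟨_, hd, ?_, ?_⟩
  · have h := (hasSum_nat_add_iff' 1).2 hsum
    simp only [Finset.sum_range_one, Nat.cast_zero, zero_mul, mul_zero, sub_zero] at h
    refine h.congr_fun' fun n => ?_
    rw [Nat.add_sub_cancel]
    push_cast
    ring
  · refine (hsum.mul_left x).congr_fun' fun n => ?_
    cases n with
    | zero => simp
    | succ n => rw [Nat.add_sub_cancel, pow_succ]; ring

lemma hasDerivAt_sqrt_one_sub {x : ℝ} (hx : |x| < 1) :
    HasDerivAt (fun z => sqrt (1 - z)) (-1 / (2 * sqrt (1 - x))) x := by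
  have h1 : 0 < 1 - x := by linarith [le_abs_self x]
  exact ((hasDerivAt_id x).const_sub 1).sqrt h1.ne'

/-- `√(1 - x)` is an integrating factor for `2 (1 - x) f' = f + g`. -/
lemma hasDerivAt_integrating {f : ℝ → ℝ} {d g x : ℝ} (hx : |x| < 1) (hf : HasDerivAt f d x)
    (h : 2 * d = f x + g + 2 * (x * d)) :
    HasDerivAt (fun z => f z * sqrt (1 - z)) (g / (2 * sqrt (1 - x))) x := by
  have h1 : 0 < 1 - x := by linarith [le_abs_self x]
  have hs : 0 < sqrt (1 - x) := Real.sqrt_pos.2 h1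
  have hq : sqrt (1 - x) ^ 2 = 1 - x := Real.sq_sqrt h1.le
  refine (hf.mul (hasDerivAt_sqrt_one_sub hx)).congr_deriv ?_
  field_simp
  rw [hq]
  linear_combination h

lemma eq_of_hasDerivAt {f g d : ℝ → ℝ} (hf : ∀ x, |x| < 1 → HasDerivAt f (d x) x)
    (hg : ∀ x, |x| < 1 → HasDerivAt g (d x) x) (h0 : f 0 = g 0) {x : ℝ} (hx : |x| < 1) :
    f x = g x := by
  have hb : ∀ {z : ℝ}, z ∈ Metric.ball (0 : ℝ) 1 → |z| < 1 := fun hz => by simpa using hz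
  refine Metric.isOpen_ball.eqOn_of_deriv_eq (convex_ball (0 : ℝ) 1).isPreconnected
    (fun z hz => (hf z (hb hz)).differentiableAt.differentiableWithinAt)
    (fun z hz => (hg z (hb hz)).differentiableAt.differentiableWithinAt)
    (fun z hz => ?_) (Metric.mem_ball_self one_pos) h0 (by simpa using hx)
  rw [(hf z (hb hz)).deriv, (hg z (hb hz)).deriv]

lemma tsum_ps_zero (c : ℕ → ℝ) : ∑' n, c n * (0 : ℝ) ^ n = c 0 := by
  rw [tsum_eq_single 0 fun n hn => by simp [hn]]
  simp

lemma tsum_aa {x : ℝ} (hx : |x| < 1) : (∑' n, aa n * x ^ n) * sqrt (1 - x) = 1 := by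
  refine eq_of_hasDerivAt (f := fun x => (∑' n, aa n * x ^ n) * sqrt (1 - x)) (g := fun _ => 1)
    (d := fun _ => 0) (fun z hz => ?_) (fun z _ => hasDerivAt_const z 1) ?_ hx
  · obtain ⟨d, hd, h1, h2⟩ := hasDerivAt_ps abs_aa_le hz
    have h := hasDerivAt_integrating (g := 0) hz hd ?_
    · simpa using h
    refine (h1.mul_left 2).unique ?_
    rw [add_zero]
    refine ((summable_ps abs_aa_le hz).hasSum.add (h2.mul_left 2)).congr_fun' fun n => ?_
    linear_combination z ^ n * aa_succ n
  · simp only [tsum_ps_zero, aa_zero]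
    simp

/-- The inhomogeneous term of the differential equation; the sum telescopes because
`aₙ / (2n + 2) = aₙ - aₙ₊₁`. -/
lemma tsum_source {x : ℝ} (hx : |x| < 1) :
    HasSum (fun n : ℕ => aa n / (2 * n + 2) * x ^ n) (1 / (1 + sqrt (1 - x))) := by
  have h1 : 0 < 1 - x := by linarith [le_abs_self x]
  have hs : 0 < sqrt (1 - x) := Real.sqrt_pos.2 h1
  have hq : sqrt (1 - x) ^ 2 = 1 - x := Real.sq_sqrt h1.le
  have he : ∀ n, aa n / (2 * n + 2) = aa n - aa (n + 1) := fun n => by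
    have h := aa_succ n
    have h3 : (2 * (n : ℝ) + 2) ≠ 0 := by positivity
    field_simp
    linear_combination h
  have hA := (summable_ps abs_aa_le hx).hasSum
  have hB := (summable_ps (fun n => abs_aa_le (n + 1)) hx).hasSum
  have hT := tsum_aa hx
  have hD := hA.sub hB
  set S := ∑' n, aa n * x ^ n with hS
  set T := ∑' n, aa (n + 1) * x ^ n with hTdef
  have hST : S = 1 + x * T := by
    rw [hS, (summable_ps abs_aa_le hx).tsum_eq_zero_add, hTdef, ← tsum_mul_left, aa_zero]
    simp only [pow_zero, mul_one]
    congr 1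
    exact tsum_congr fun n => by ring
  have hval : S - T = 1 / (1 + sqrt (1 - x)) := by
    rcases eq_or_ne x 0 with rfl | h0
    · have h2 : T = aa 1 := by rw [hTdef, tsum_ps_zero]
      have h3 := aa_succ 0
      rw [hST, h2]
      rw [aa_zero] at h3
      norm_num at h3 ⊢
      linarith
    · have hp : (1 + sqrt (1 - x)) ≠ 0 := by positivity
      rw [eq_div_iff hp]
      apply mul_left_cancel₀ h0
      have h4 : x * (S - T) = 1 - sqrt (1 - x) := by
        linear_combination -sqrt (1 - x) * hT + hST + S * hq
      linear_combination (1 + sqrt (1 - x)) * h4 - hq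
  rw [← hval]
  refine hD.congr_fun' fun n => ?_
  rw [he]
  ring

lemma tsum_harmonic {x : ℝ} (hx : |x| < 1) :
    (∑' n, cc n * x ^ n) * sqrt (1 - x) = -log ((1 + sqrt (1 - x)) / 2) := by
  refine eq_of_hasDerivAt (f := fun x => (∑' n, cc n * x ^ n) * sqrt (1 - x))
    (g := fun x => -log ((1 + sqrt (1 - x)) / 2))
    (d := fun x => 1 / (1 + sqrt (1 - x)) / (2 * sqrt (1 - x)))
    (fun z hz => ?_) (fun z hz => ?_) ?_ hx
  · obtain ⟨d, hd, h1, h2⟩ := hasDerivAt_ps abs_cc_le hz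
    refine hasDerivAt_integrating hz hd ((h1.mul_left 2).unique ?_)
    refine (((summable_ps abs_cc_le hz).hasSum.add (tsum_source hz)).add
      (h2.mul_left 2)).congr_fun' fun n => ?_
    linear_combination z ^ n * cc_succ n
  · have hs : 0 < sqrt (1 - z) := Real.sqrt_pos.2 (by linarith [le_abs_self z])
    have h := ((((hasDerivAt_sqrt_one_sub hz).const_add 1).div_const 2).log
      (by positivity)).neg
    refine h.congr_deriv ?_
    field_simp
  · simp only [tsum_ps_zero]
    simp [cc]

theorem stmt_3 (r : ℕ) (hr : 1 ≤ r) :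
    ∑' n : ℕ,
        (1 / ((4 : ℝ) ^ (n + 1) * α ^ (r * (n + 1)) * ((lucas r : ℝ)) ^ (n + 1))) *
        (Nat.choose (2 * (n + 1)) (n + 1) : ℝ) * (H (2 * (n + 1)) - H (n + 1))
      = -(Real.sqrt (α ^ r * (lucas r : ℝ)) / Real.sqrt (α ^ r * (lucas r : ℝ) - 1)) *
        Real.log ((Real.sqrt (α ^ r * (lucas r : ℝ)) + Real.sqrt (α ^ r * (lucas r : ℝ) - 1)) /
          (2 * Real.sqrt (α ^ r * (lucas r : ℝ)))) := by
  set y : ℝ := α ^ r * (lucas r : ℝ) with hy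
  have hα : 1 < α := by
    have : (1 : ℝ) < Real.sqrt 5 := Real.lt_sqrt_of_sq_lt (by norm_num)
    unfold α; linarith
  have hL : (1 : ℝ) ≤ lucas r := by exact_mod_cast lucas_pos r
  have hy1 : 1 < y := by
    have h1 : 1 < α ^ r := one_lt_pow₀ hα (by omega)
    nlinarith
  have hy0 : 0 < y := by linarith
  have hx : |y⁻¹| < 1 := by
    rw [abs_of_pos (inv_pos.2 hy0)]
    exact inv_lt_one_of_one_lt₀ hy1
  have hs : sqrt (1 - y⁻¹) = sqrt (y - 1) / sqrt y := by
    rw [← Real.sqrt_div (by linarith)]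
    congr 1
    field_simp
  have hF := tsum_harmonic hx
  rw [(summable_ps abs_cc_le hx).tsum_eq_zero_add] at hF
  have h0 : cc 0 * y⁻¹ ^ 0 = 0 := by simp [cc]
  rw [h0, zero_add, hs] at hF
  have hsy : 0 < sqrt y := Real.sqrt_pos.2 hy0
  have hsy1 : 0 < sqrt (y - 1) := Real.sqrt_pos.2 (by linarith)
  calc _ = ∑' n : ℕ, cc (n + 1) * y⁻¹ ^ (n + 1) := by
        refine tsum_congr fun n => ?_
        have h1 : y ^ (n + 1) = α ^ (r * (n + 1)) * (lucas r : ℝ) ^ (n + 1) := by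
          rw [hy, mul_pow, ← pow_mul]
        rw [cc, aa, inv_pow, h1, Nat.centralBinom]
        simp only [div_eq_mul_inv, mul_inv]
        ring
    _ = _ := by
        rw [eq_div_of_mul_eq (by positivity) hF]
        have h2 : (1 + sqrt (y - 1) / sqrt y) / 2 = (sqrt y + sqrt (y - 1)) / (2 * sqrt y) := by
          field_simp
        rw [h2]
        field_simp
end

section
/- The series ∑_{n=1}^∞ (C_n · (H_{2n} − (1/2)H_n)/(4^n (2n+1))) · (π/2 − (2n)!!/(2n+1)!!) equals 2 ln 2 + (7/8) ζ(3) + (π/12)(−12 + π(−1 + ln 8)). -/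
/-!
Write `cb n = binom(2n, n) / 4^n` and `oddH n = ∑_{k ≤ n} 1/(2k-1) = H (2n) - H n / 2`. Since
`(2n)!! / (2n+1)!! = 1 / (cb n (2n+1))`, partial fractions turn the series into
`π/2 · (2 S - S') - (2 T - R)`, where

* `S = ∑ cb n oddH n / (2n+1) = (π/2) log 2` (`hasSum_cb_oddH_odd`),
* `S' = ∑ cb n oddH n / (n+1) = 2` (`hasSum_cb_oddH_succ`),
* `T = ∑ oddH n / (2n+1)² = (π²/8) log 2 - (7/16) ζ(3)` (`hasSum_oddH_odd_sq`),
* `R = ∑ oddH n / ((n+1)(2n+1)) = 2 log 2 - π²/12` (`hasSum_oddH_mixed`).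

For `S`, the coefficients `cb n oddH n` are a convolution of `cb` with `1/(2(i+1))`
(`sum_antidiagonal_cb`). Summing the resulting double series by rows gives the Beta values
`∑_m cb m / (m + k + 1/2) = π cb k`, which follow from a recurrence in the parameter together with
Wallis' product (`betaSeries_half`), and leaves `∑_{k ≥ 1} cb k / k = 2 log 2` (`hasSum_cb_div`).
The partial sums of `S'` have a closed form.

For `T`, the convergent double series of `1 / (x y (x + y))` over odd `x, y`, and over odd `x` and
even `y`, are summed by rows, by columns and along antidiagonals. This yields linear relations
between `T`, `ζ(3)`, `π² log 2` and three auxiliary sums, which determine `T`.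

For `R`, the partial sums reduce to the sum of `1 / (x y)` over odd `x, y < 2N` with `x + y > 2N`.
The corresponding sum over even numbers is a quarter of `∑ 1/k²` up to a vanishing correction, and
squeezing the odd sum between two even ones gives the limit `π²/24` (`tendsto_oddCorner`).
-/

open Real

/-- The `n`-th Catalan number `C n = (1/(n+1)) * binom(2n, n)`, as a real number. -/
noncomputable def C (n : ℕ) : ℝ := (Nat.choose (2 * n) n : ℝ) / (n + 1)

/-- `ζ(3) = ∑_{n=1}^∞ 1/n³`, the value of the Riemann zeta function at `3`. -/
noncomputable def zetaThree : ℝ := ∑' n : ℕ, 1 / ((n : ℝ) + 1) ^ 3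


open Filter Topology Finset

/-! ### Double series with nonnegative terms -/

theorem hasSum_prod_of_rows {F : ℕ → ℕ → ℝ} (hF : ∀ i j, 0 ≤ F i j) {r : ℕ → ℝ} {A : ℝ}
    (hr : ∀ i, HasSum (F i) (r i)) (hA : HasSum r A) :
    HasSum (fun p : ℕ × ℕ => F p.1 p.2) A := by
  have hs : Summable (fun p : ℕ × ℕ => F p.1 p.2) := by
    rw [summable_prod_of_nonneg (fun p => hF p.1 p.2)]
    refine ⟨fun i => (hr i).summable, ?_⟩
    simpa only [(hr _).tsum_eq] using hA.summable
  have h := hs.hasSum.prod_fiberwise (g := r) hr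
  rw [hA.unique h]
  exact hs.hasSum

theorem hasSum_cols {F : ℕ → ℕ → ℝ} {c : ℕ → ℝ} {A : ℝ}
    (h : HasSum (fun p : ℕ × ℕ => F p.1 p.2) A) (hc : ∀ j, HasSum (fun i => F i j) (c j)) :
    HasSum c A :=
  ((Equiv.prodComm ℕ ℕ).hasSum_iff.mpr h).prod_fiberwise hc

theorem hasSum_diag {F : ℕ → ℕ → ℝ} {A : ℝ}
    (h : HasSum (fun p : ℕ × ℕ => F p.1 p.2) A) :
    HasSum (fun n => ∑ p ∈ antidiagonal n, F p.1 p.2) A := by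
  have h1 := (HasAntidiagonal.sigmaAntidiagonalEquivProd (A := ℕ)).hasSum_iff.mpr h
  refine h1.sigma fun n => ?_
  have h2 := (antidiagonal n).hasSum (fun p : ℕ × ℕ => F p.1 p.2)
  exact h2

/-! ### Telescoping series and shifts -/

theorem hasSum_of_eq {f g : ℕ → ℝ} {a b : ℝ} (h : HasSum f a) (hf : ∀ n, g n = f n)
    (hb : b = a) : HasSum g b := by
  rw [funext hf, hb]
  exact h

theorem hasSum_telescope {g : ℕ → ℝ} {l : ℝ} (hg : ∀ n, g (n + 1) ≤ g n)
    (hl : Tendsto g atTop (𝓝 l)) : HasSum (fun n => g n - g (n + 1)) (g 0 - l) := by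
  rw [hasSum_iff_tendsto_nat_of_nonneg (fun n => sub_nonneg.mpr (hg n))]
  simp_rw [Finset.sum_range_sub']
  exact tendsto_const_nhds.sub hl

/-- Delaying the subtracted sequence by `i` steps adds its first `i` terms to the sum. -/
theorem hasSum_shift {α β : ℕ → ℝ} {s : ℝ} (h : HasSum (fun j => α j - β j) s)
    (hβ : Antitone β) (h0 : Tendsto β atTop (𝓝 0)) (i : ℕ) :
    HasSum (fun j => α j - β (j + i)) (s + ∑ k ∈ range i, β k) := by
  induction i with
  | zero => simpa using h
  | succ i ih =>
    have h1 := hasSum_telescope (g := fun n => β (n + i)) (l := 0)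
      (fun n => hβ (by omega)) (h0.comp (tendsto_add_atTop_nat i))
    convert ih.add h1 using 1
    · ext j
      rw [show j + (i + 1) = j + 1 + i by ring]
      ring
    · rw [sum_range_succ]
      simp
      ring

theorem hasSum_of_succ {f : ℕ → ℝ} {a : ℝ} (h0 : f 0 = 0) (h : HasSum (fun n => f (n + 1)) a) :
    HasSum f a := by
  rw [hasSum_nat_add_iff 1] at h
  simpa [h0] using h

theorem hasSum_succ_of {f : ℕ → ℝ} {a : ℝ} (h0 : f 0 = 0) (h : HasSum f a) :
    HasSum (fun n => f (n + 1)) a := by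
  rw [hasSum_nat_add_iff 1]
  simpa [h0] using h

theorem tendsto_div_of_sub {u : ℕ → ℝ} (h0 : u 0 = 0)
    (h : Tendsto (fun n => u (n + 1) - u n) atTop (𝓝 0)) :
    Tendsto (fun n : ℕ => (n : ℝ)⁻¹ * u n) atTop (𝓝 0) := by
  simpa only [sum_range_sub, h0, sub_zero] using h.cesaro

theorem tendsto_const_div_linear (a b c : ℝ) (hb : 0 < b) :
    Tendsto (fun n : ℕ => a / (b * (n : ℝ) + c)) atTop (𝓝 0) :=
  tendsto_const_nhds.div_atTop
    (tendsto_atTop_add_const_right _ _ (tendsto_natCast_atTop_atTop.const_mul_atTop hb))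

/-! ### Odd harmonic numbers -/

/-- The odd harmonic number `∑_{k=1}^n 1/(2k-1) = H (2n) - H n / 2`. -/
noncomputable def oddH (n : ℕ) : ℝ := ∑ k ∈ range n, 1 / (2 * (k : ℝ) + 1)

theorem oddH_succ (n : ℕ) : oddH (n + 1) = oddH n + 1 / (2 * (n : ℝ) + 1) := by
  simp [oddH, sum_range_succ]

theorem H_succ (n : ℕ) : H (n + 1) = H n + 1 / ((n : ℝ) + 1) := by
  simp [H, sum_range_succ]

theorem oddH_zero : oddH 0 = 0 := by simp [oddH]

theorem H_zero : H 0 = 0 := by simp [H]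

theorem oddH_nonneg (n : ℕ) : 0 ≤ oddH n := sum_nonneg fun k _ => by positivity

theorem H_two_mul (n : ℕ) : H (2 * n) = oddH n + H n / 2 := by
  induction n with
  | zero => simp [H, oddH]
  | succ n ih =>
    rw [show 2 * (n + 1) = 2 * n + 1 + 1 by ring, H_succ, H_succ, ih, oddH_succ, H_succ]
    push_cast
    field_simp
    ring

theorem tendsto_oddH_sub : Tendsto (fun n => oddH n - H n / 2) atTop (𝓝 (log 2)) := by
  have hH : ∀ n, H n = (harmonic n : ℝ) := fun n => by simp [H, harmonic]
  have h1 := tendsto_harmonic_sub_log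
  have h2 := h1.comp (tendsto_id.const_mul_atTop' (by norm_num : 0 < 2))
  have h3 := (h2.sub h1).add_const (log 2)
  rw [sub_self, zero_add] at h3
  refine h3.congr' ?_
  filter_upwards [eventually_gt_atTop 0] with n hn
  have hn' : (n : ℝ) ≠ 0 := by positivity
  simp only [Function.comp, id]
  rw [← hH, ← hH, H_two_mul]
  push_cast
  rw [log_mul two_ne_zero hn']
  ring

theorem hasSum_log_two :
    HasSum (fun n : ℕ => 1 / (2 * (n : ℝ) + 1) - 1 / (2 * (n : ℝ) + 2)) (log 2) := by
  rw [hasSum_iff_tendsto_nat_of_nonneg]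
  · refine tendsto_oddH_sub.congr fun n => ?_
    rw [sum_sub_distrib, oddH, H, sum_div]
    congr 1
    refine sum_congr rfl fun k _ => ?_
    field_simp
  · intro n
    rw [sub_nonneg]
    gcongr
    norm_num

theorem tendsto_H_div : Tendsto (fun n : ℕ => (n : ℝ)⁻¹ * H n) atTop (𝓝 0) := by
  refine tendsto_div_of_sub H_zero ?_
  simpa [H_succ] using tendsto_const_div_linear 1 1 1 one_pos

theorem tendsto_oddH_sq_div : Tendsto (fun n : ℕ => (n : ℝ)⁻¹ * oddH n ^ 2) atTop (𝓝 0) := by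
  have h1 : Tendsto (fun n : ℕ => 1 / (2 * (n : ℝ) + 1)) atTop (𝓝 0) :=
    tendsto_const_div_linear 1 2 1 two_pos
  have h2 : Tendsto (fun n : ℕ => (n : ℝ)⁻¹ * oddH n) atTop (𝓝 0) := by
    refine tendsto_div_of_sub oddH_zero ?_
    simpa [oddH_succ] using h1
  refine tendsto_div_of_sub (by simp [oddH_zero]) ?_
  have h3 : Tendsto (fun n : ℕ => (n : ℝ)⁻¹ * oddH n + (1 / (2 * (n : ℝ) + 1)) ^ 2) atTop (𝓝 0) := by
    simpa using h2.add (h1.pow 2)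
  refine squeeze_zero (fun n => ?_) (fun n => ?_) h3
  · have := oddH_nonneg n
    rw [oddH_succ, sub_nonneg]
    have : (0 : ℝ) ≤ 1 / (2 * (n : ℝ) + 1) := by positivity
    gcongr
    linarith
  · rcases Nat.eq_zero_or_pos n with rfl | hn
    · simp [oddH]
    · have h := oddH_nonneg n
      have hn' : (0 : ℝ) < n := by exact_mod_cast hn
      have h4 : 1 / (2 * (n : ℝ) + 1) * 2 ≤ (n : ℝ)⁻¹ := by
        field_simp
        linarith
      rw [oddH_succ]
      nlinarith [mul_le_mul_of_nonneg_right h4 h]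

theorem hasSum_odd_zeta {p : ℕ} {A : ℝ} (h : HasSum (fun n : ℕ => 1 / ((n : ℝ) + 1) ^ p) A) :
    HasSum (fun n : ℕ => 1 / (2 * (n : ℝ) + 1) ^ p) (A - A / 2 ^ p) := by
  have he : HasSum (fun n : ℕ => 1 / (((2 * n + 1 : ℕ) : ℝ) + 1) ^ p) (A / 2 ^ p) := by
    refine (h.div_const (2 ^ p)).congr_fun fun n => ?_
    push_cast
    rw [div_div, ← mul_pow]
    ring_nf
  have ho : Summable (fun n : ℕ => 1 / (((2 * n : ℕ) : ℝ) + 1) ^ p) :=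
    h.summable.comp_injective (mul_right_injective₀ two_ne_zero)
  have h2 := HasSum.even_add_odd (f := fun n : ℕ => 1 / ((n : ℝ) + 1) ^ p) ho.hasSum he
  have h3 := h2.unique h
  have h4 := ho.hasSum
  rw [show (∑' n : ℕ, 1 / (((2 * n : ℕ) : ℝ) + 1) ^ p) = A - A / 2 ^ p by linarith] at h4
  simpa using h4

theorem hasSum_zeta_two_succ : HasSum (fun n : ℕ => 1 / ((n : ℝ) + 1) ^ 2) (π ^ 2 / 6) := by
  simpa using hasSum_succ_of (f := fun n : ℕ => 1 / (n : ℝ) ^ 2) (by simp) hasSum_zeta_two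

theorem hasSum_odd_two : HasSum (fun n : ℕ => 1 / (2 * (n : ℝ) + 1) ^ 2) (π ^ 2 / 8) := by
  convert hasSum_odd_zeta hasSum_zeta_two_succ using 1
  ring

theorem hasSum_odd_three :
    HasSum (fun n : ℕ => 1 / (2 * (n : ℝ) + 1) ^ 3) (7 / 8 * zetaThree) := by
  have h : Summable (fun n : ℕ => 1 / ((n : ℝ) + 1) ^ 3) := by
    have := (summable_nat_add_iff 1).mpr
      (Real.summable_one_div_nat_pow.mpr (by norm_num : 1 < 3))
    simpa using this
  convert hasSum_odd_zeta h.hasSum using 1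
  rw [zetaThree]
  ring

/-! ### Normalized central binomial coefficients -/

/-- The normalized central binomial coefficient `binom(2n, n) / 4^n`. -/
noncomputable def cb (n : ℕ) : ℝ := (Nat.centralBinom n : ℝ) / 4 ^ n

theorem cb_zero : cb 0 = 1 := by simp [cb]

theorem cb_pos (n : ℕ) : 0 < cb n := by
  have := Nat.centralBinom_pos n
  unfold cb
  positivity

theorem cb_succ_mul (n : ℕ) : cb (n + 1) * (2 * (n : ℝ) + 2) = (2 * (n : ℝ) + 1) * cb n := by
  have h : ((n : ℝ) + 1) * (Nat.centralBinom (n + 1) : ℝ)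
      = 2 * (2 * (n : ℝ) + 1) * (Nat.centralBinom n : ℝ) := by
    exact_mod_cast Nat.succ_mul_centralBinom_succ n
  unfold cb
  rw [pow_succ]
  field_simp
  linear_combination 2 * h

theorem cb_succ (n : ℕ) : cb (n + 1) = (2 * (n : ℝ) + 1) * cb n / (2 * (n : ℝ) + 2) := by
  rw [eq_div_iff (by positivity), cb_succ_mul]

theorem cb_sub_succ (n : ℕ) : cb n - cb (n + 1) = cb n / ((n : ℝ) + 1) / 2 := by
  rw [cb_succ]
  field_simp
  ring

theorem cb_antitone : Antitone cb := by
  refine antitone_nat_of_succ_le fun n => ?_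
  have h := cb_sub_succ n
  have h1 : 0 ≤ cb n / ((n : ℝ) + 1) / 2 := by have := cb_pos n; positivity
  linarith

/-- Wallis' product in terms of central binomial coefficients. -/
theorem cb_sq_mul_W (n : ℕ) : cb n ^ 2 * (2 * (n : ℝ) + 1) * Wallis.W n = 1 := by
  induction n with
  | zero => simp [cb, Wallis.W]
  | succ n ih =>
    have h : cb (n + 1) ^ 2 * (2 * ((n + 1 : ℕ) : ℝ) + 1) * Wallis.W (n + 1)
        = cb n ^ 2 * (2 * (n : ℝ) + 1) * Wallis.W n := by
      rw [Wallis.W_succ, cb_succ]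
      push_cast
      field_simp
      ring
    rw [h, ih]

theorem cb_sq_mul_le (n : ℕ) : cb n ^ 2 * (2 * (n : ℝ) + 1) ≤ 1 := by
  induction n with
  | zero => simp [cb_zero]
  | succ n ih =>
    refine le_trans ?_ ih
    have h : cb (n + 1) ^ 2 * (2 * ((n + 1 : ℕ) : ℝ) + 1) = cb n ^ 2 * (2 * (n : ℝ) + 1)
        * ((2 * n + 1) * (2 * n + 3) / (2 * n + 2) ^ 2) := by
      rw [cb_succ]
      push_cast
      field_simp
      ring
    rw [h]
    refine mul_le_of_le_one_right (by positivity) ?_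
    rw [div_le_one (by positivity)]
    nlinarith

theorem cb_tendsto : Tendsto cb atTop (𝓝 0) := by
  have h1 : Tendsto (fun n : ℕ => 1 / (2 * (n : ℝ) + 1) * (Wallis.W n)⁻¹) atTop
      (𝓝 (0 * (π / 2)⁻¹)) :=
    (tendsto_const_div_linear 1 2 1 two_pos).mul
      (Wallis.tendsto_W_nhds_pi_div_two.inv₀ (by positivity))
  rw [zero_mul] at h1
  have h2 := h1.sqrt
  rw [sqrt_zero] at h2
  refine h2.congr fun n => ?_
  have hW := Wallis.W_pos n
  rw [show 1 / (2 * (n : ℝ) + 1) * (Wallis.W n)⁻¹ = cb n ^ 2 by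
    have := cb_sq_mul_W n
    field_simp
    linarith, sqrt_sq (cb_pos n).le]

theorem hasSum_cb_div_succ : HasSum (fun n : ℕ => cb n / ((n : ℝ) + 1)) 2 := by
  have h := (hasSum_telescope (fun n => cb_antitone n.le_succ) cb_tendsto).mul_left 2
  simp_rw [cb_sub_succ, cb_zero] at h
  exact hasSum_of_eq h (fun n => by ring) (by norm_num)

/-! ### The Beta-type series `∑ binom(2m, m) / (4^m (m + s))` -/

/-- The series `∑_m binom(2m, m) / (4^m (m + s))`, whose value is the Beta function
`B(s, 1/2)`. -/
noncomputable def betaSeries (s : ℝ) : ℝ := ∑' m : ℕ, cb m / ((m : ℝ) + s)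

theorem hasSum_betaSeries {s : ℝ} (hs : 0 < s) :
    HasSum (fun m : ℕ => cb m / ((m : ℝ) + s)) (betaSeries s) := by
  refine Summable.hasSum ?_
  refine Summable.of_nonneg_of_le (fun m => ?_) (fun m => ?_)
    (hasSum_cb_div_succ.summable.mul_left (1 + 1 / s))
  · have := cb_pos m
    positivity
  · have := cb_pos m
    rw [div_le_iff₀ (by positivity)]
    have h : (1 + 1 / s) * (cb m / ((m : ℝ) + 1)) * ((m : ℝ) + s)
        = cb m * (1 + m / (s * (m + 1)) + s / (m + 1) * 1) := by
      field_simp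
      ring
    rw [h]
    have : 0 ≤ m / (s * ((m : ℝ) + 1)) + s / (m + 1) * 1 := by positivity
    nlinarith

theorem betaSeries_anti {s t : ℝ} (hs : 0 < s) (hst : s ≤ t) : betaSeries t ≤ betaSeries s := by
  refine hasSum_le (fun m => ?_) (hasSum_betaSeries (hs.trans_le hst)) (hasSum_betaSeries hs)
  have := cb_pos m
  gcongr

theorem betaSeries_succ {s : ℝ} (hs : 0 < s) :
    (2 * s + 1) * betaSeries (s + 1) = 2 * s * betaSeries s := by
  have h := ((hasSum_betaSeries hs).mul_left (2 * s)).sub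
    ((hasSum_betaSeries (by linarith : 0 < s + 1)).mul_left (2 * s + 1))
  have h1 := h.tendsto_sum_nat
  -- the terms of the difference are the increments of `2 m cb m / (m + s)`
  have h2 : ∀ n, ∑ m ∈ range n, (2 * s * (cb m / ((m : ℝ) + s))
      - (2 * s + 1) * (cb m / ((m : ℝ) + (s + 1)))) = 2 * n / (n + s) * cb n := by
    intro n
    induction n with
    | zero => simp
    | succ n ih =>
      rw [sum_range_succ, ih, cb_succ]
      push_cast
      have : (n : ℝ) + 1 + s ≠ 0 := by positivity
      have : (n : ℝ) + (s + 1) ≠ 0 := by positivity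
      field_simp
      ring
  simp_rw [h2] at h1
  have h3 : Tendsto (fun n : ℕ => 2 * n / (n + s) * cb n) atTop (𝓝 0) := by
    refine squeeze_zero (fun n => ?_) (fun n => ?_) (by simpa using cb_tendsto.const_mul 2)
    · have := cb_pos n
      positivity
    · have := cb_pos n
      gcongr
      rw [div_le_iff₀ (by positivity)]
      linarith
  linarith [tendsto_nhds_unique h1 h3]

theorem betaSeries_natCast_succ (k : ℕ) :
    betaSeries ((k : ℝ) + 1) = 2 / (cb k * (2 * (k : ℝ) + 1)) := by
  induction k with
  | zero =>
    have h := (hasSum_betaSeries one_pos).unique hasSum_cb_div_succ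
    simp [h, cb_zero]
  | succ k ih =>
    have h := betaSeries_succ (by positivity : 0 < (k : ℝ) + 1)
    have := cb_pos k
    rw [ih] at h
    push_cast
    rw [cb_succ, eq_div_iff (by positivity)]
    field_simp at h ⊢
    linear_combination h

theorem betaSeries_half_eq_mul (k : ℕ) :
    betaSeries ((k : ℝ) + 1 / 2) = betaSeries (1 / 2) * cb k := by
  induction k with
  | zero => simp [cb_zero]
  | succ k ih =>
    have h := betaSeries_succ (by positivity : 0 < (k : ℝ) + 1 / 2)
    rw [ih] at h
    push_cast
    rw [cb_succ, show (k : ℝ) + 1 + 1 / 2 = k + 1 / 2 + 1 by ring]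
    field_simp at h ⊢
    linear_combination h

/-- Interlacing the integer and half-integer values of the series squeezes its value at `1/2`
between two multiples of Wallis' product. -/
theorem betaSeries_half : betaSeries (1 / 2) = π := by
  have hlow : ∀ k : ℕ, 2 * Wallis.W k ≤ betaSeries (1 / 2) := by
    intro k
    have h := betaSeries_anti (by positivity : 0 < (k : ℝ) + 1 / 2)
      (by linarith : (k : ℝ) + 1 / 2 ≤ k + 1)
    rw [betaSeries_natCast_succ, betaSeries_half_eq_mul] at h
    have hc := cb_pos k
    rw [div_le_iff₀ (by positivity)] at h
    have hW := Wallis.W_pos k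
    nlinarith [cb_sq_mul_W k, mul_le_mul_of_nonneg_right h hW.le]
  have hup : ∀ k : ℕ, betaSeries (1 / 2) ≤ 2 * Wallis.W k * (1 + 1 / (2 * (k : ℝ) + 1)) := by
    intro k
    have h := betaSeries_anti (by positivity : 0 < (k : ℝ) + 1)
      (by push_cast; linarith : (k : ℝ) + 1 ≤ ((k + 1 : ℕ) : ℝ) + 1 / 2)
    rw [betaSeries_natCast_succ, betaSeries_half_eq_mul, cb_succ] at h
    have hc := cb_pos k
    rw [le_div_iff₀ (by positivity)] at h
    have hW := Wallis.W_pos k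
    have h1 := mul_le_mul_of_nonneg_right h hW.le
    have h2 : betaSeries (1 / 2) * ((2 * (k : ℝ) + 1) * cb k / (2 * k + 2))
        * (cb k * (2 * k + 1)) * Wallis.W k
        = betaSeries (1 / 2) * (2 * k + 1) / (2 * k + 2)
          * (cb k ^ 2 * (2 * (k : ℝ) + 1) * Wallis.W k) := by ring
    rw [h2, cb_sq_mul_W, mul_one, div_le_iff₀ (by positivity)] at h1
    rw [show 2 * Wallis.W k * (1 + 1 / (2 * (k : ℝ) + 1))
      = 2 * Wallis.W k * (2 * k + 2) / (2 * k + 1) by field_simp; ring, le_div_iff₀ (by positivity)]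
    exact h1
  have hW := Wallis.tendsto_W_nhds_pi_div_two.const_mul 2
  have hW' := hW.mul ((tendsto_const_div_linear 1 2 1 two_pos).const_add 1)
  rw [show 2 * (π / 2) = π by ring] at hW hW'
  rw [add_zero, mul_one] at hW'
  exact le_antisymm (ge_of_tendsto' hW' hup) (le_of_tendsto' hW hlow)

/-! ### The series `∑ binom(2n, n) / (4^n n) = 2 log 2` -/

/-- The reciprocal binomial coefficient `j! k! / (j + k)!`. -/
noncomputable def invChoose (j k : ℕ) : ℝ :=
  (j.factorial : ℝ) * (k.factorial : ℝ) / ((j + k).factorial : ℝ)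

theorem invChoose_pos (j k : ℕ) : 0 < invChoose j k := by
  unfold invChoose
  positivity

theorem invChoose_succ_left (j k : ℕ) :
    invChoose (j + 1) k = ((j : ℝ) + 1) / (j + k + 1) * invChoose j k := by
  unfold invChoose
  rw [show j + 1 + k = j + k + 1 by ring, Nat.factorial_succ, Nat.factorial_succ]
  push_cast
  field_simp

theorem invChoose_succ_right (j k : ℕ) :
    invChoose j (k + 1) = ((k : ℝ) + 1) / (j + k + 1) * invChoose j k := by
  unfold invChoose
  rw [show j + (k + 1) = j + k + 1 by ring, Nat.factorial_succ, Nat.factorial_succ]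
  push_cast
  field_simp

theorem invChoose_zero_right (j : ℕ) : invChoose j 0 = 1 := by
  unfold invChoose
  simp
  positivity

theorem invChoose_le_one (j k : ℕ) : invChoose j k ≤ 1 := by
  induction k with
  | zero => rw [invChoose_zero_right]
  | succ k ih =>
    rw [invChoose_succ_right]
    have := (invChoose_pos j k).le
    refine mul_le_one₀ ?_ this ih
    rw [div_le_one (by positivity)]
    linarith [(Nat.cast_nonneg j : (0 : ℝ) ≤ j)]

theorem invChoose_succ_le (j k : ℕ) : invChoose j (k + 1) ≤ 1 / ((j : ℝ) + 1) := by
  induction k with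
  | zero =>
    rw [invChoose_succ_right, invChoose_zero_right]
    simp
  | succ k ih =>
    rw [invChoose_succ_right]
    have h := (invChoose_pos j (k + 1)).le
    refine (mul_le_of_le_one_left h ?_).trans ih
    rw [div_le_one (by positivity)]
    linarith [(Nat.cast_nonneg j : (0 : ℝ) ≤ j)]

/-- Summing over `j` the Beta integrals `∫ x^(k+1) (1-x)^j` by telescoping. -/
theorem hasSum_invChoose_left (k : ℕ) :
    HasSum (fun j : ℕ => invChoose j (k + 1) / ((j : ℝ) + k + 2)) (1 / ((k : ℝ) + 1)) := by
  have hd : ∀ j : ℕ, invChoose j (k + 1) / ((k : ℝ) + 1)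
      - invChoose (j + 1) (k + 1) / ((k : ℝ) + 1) = invChoose j (k + 1) / ((j : ℝ) + k + 2) := by
    intro j
    rw [invChoose_succ_left]
    push_cast
    have : (j : ℝ) + (k + 1) + 1 ≠ 0 := by positivity
    field_simp
    ring
  have hl : Tendsto (fun j : ℕ => invChoose j (k + 1) / ((k : ℝ) + 1)) atTop (𝓝 0) := by
    refine squeeze_zero (fun j => ?_) (fun j => ?_) (tendsto_const_div_linear 1 1 1 one_pos)
    · have := invChoose_pos j (k + 1)
      positivity
    · have := (invChoose_pos j (k + 1)).le
      rw [one_mul]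
      exact (div_le_self this (by linarith [(Nat.cast_nonneg k : (0 : ℝ) ≤ k)])).trans
        (invChoose_succ_le j k)
  have h := hasSum_telescope (fun j => ?_) hl
  · simp_rw [hd] at h
    convert h using 1
    simp [invChoose]
    field_simp
  · have h1 := hd j
    have h2 : 0 ≤ invChoose j (k + 1) / ((j : ℝ) + k + 2) := by
      have := invChoose_pos j (k + 1)
      positivity
    linarith

/-- The same Beta integrals weighted by `cb (k + 1)`, summed over `k`: the series is
hypergeometric and Gosper summable. -/
theorem hasSum_cb_invChoose (j : ℕ) :
    HasSum (fun k : ℕ => cb (k + 1) * (invChoose j (k + 1) / ((j : ℝ) + k + 2)))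
      (2 * (1 / (2 * (j : ℝ) + 1) - 1 / (2 * (j : ℝ) + 2))) := by
  have hd : ∀ k : ℕ, 2 / (2 * (j : ℝ) + 1) * (cb (k + 1) * invChoose j (k + 1))
      - 2 / (2 * (j : ℝ) + 1) * (cb (k + 1 + 1) * invChoose j (k + 1 + 1))
      = cb (k + 1) * (invChoose j (k + 1) / ((j : ℝ) + k + 2)) := by
    intro k
    rw [invChoose_succ_right j (k + 1), cb_succ (k + 1)]
    push_cast
    have : (j : ℝ) + (k + 1) + 1 ≠ 0 := by positivity
    have : (j : ℝ) + k + 2 ≠ 0 := by positivity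
    field_simp
    ring
  have hl : Tendsto (fun k : ℕ => 2 / (2 * (j : ℝ) + 1) * (cb (k + 1) * invChoose j (k + 1)))
      atTop (𝓝 0) := by
    rw [← mul_zero (2 / (2 * (j : ℝ) + 1))]
    refine Tendsto.const_mul _ ?_
    refine squeeze_zero (fun k => ?_) (fun k => ?_)
      ((tendsto_add_atTop_iff_nat 1).mpr cb_tendsto)
    · exact (mul_pos (cb_pos _) (invChoose_pos _ _)).le
    · exact mul_le_of_le_one_right (cb_pos _).le (invChoose_le_one _ _)
  have h := hasSum_telescope (fun k => ?_) hl
  · simp_rw [hd] at h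
    convert h using 1
    rw [zero_add, cb_succ, cb_zero, invChoose_succ_right, invChoose_zero_right]
    push_cast
    field_simp
    ring
  · have h1 := hd k
    have h2 : 0 ≤ cb (k + 1) * (invChoose j (k + 1) / ((j : ℝ) + k + 2)) := by
      have := invChoose_pos j (k + 1)
      have := cb_pos (k + 1)
      positivity
    linarith

/-- Both summations of the double series of weighted Beta integrals are available in closed form,
one of them as the alternating series for `log 2`. -/
theorem hasSum_cb_div : HasSum (fun k : ℕ => cb (k + 1) / ((k : ℝ) + 1)) (2 * log 2) := by
  have h := hasSum_prod_of_rows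
    (F := fun j k => cb (k + 1) * (invChoose j (k + 1) / ((j : ℝ) + k + 2))) (fun j k => ?_)
    hasSum_cb_invChoose (hasSum_log_two.mul_left 2)
  · exact hasSum_of_eq (hasSum_cols
      (F := fun j k => cb (k + 1) * (invChoose j (k + 1) / ((j : ℝ) + k + 2))) h
      fun k => (hasSum_invChoose_left k).mul_left (cb (k + 1)))
      (fun k => by ring) rfl
  · have := invChoose_pos j (k + 1)
    have := cb_pos (k + 1)
    positivity

/-! ### Central binomial sums with odd harmonic numbers -/

/-- The convolution identity encoded by
`∑ binom(2n, n) (y/4)^n oddH n = -log (1 - y) / (2 √(1 - y))`. -/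
theorem sum_antidiagonal_cb (n : ℕ) :
    ∑ p ∈ antidiagonal n, cb p.2 / (2 * ((p.1 : ℝ) + 1)) = cb (n + 1) * oddH (n + 1) := by
  induction n with
  | zero => simp [cb_succ, cb_zero, oddH]
  | succ n ih =>
    -- Weight each term by `n + 2 = (i + 1) + j` and lower `j` with the recurrence of `cb`.
    have h1 : ((n : ℝ) + 2) * ∑ p ∈ antidiagonal (n + 1), cb p.2 / (2 * ((p.1 : ℝ) + 1))
        = (∑ p ∈ antidiagonal (n + 1), cb p.2) / 2
          + ∑ p ∈ antidiagonal (n + 1), (p.2 : ℝ) * cb p.2 / (2 * ((p.1 : ℝ) + 1)) := by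
      rw [mul_sum, sum_div, ← sum_add_distrib]
      refine sum_congr rfl fun p hp => ?_
      rw [HasAntidiagonal.mem_antidiagonal] at hp
      have : (p.1 : ℝ) + p.2 = n + 1 := by exact_mod_cast hp
      field_simp
      linear_combination (-cb p.2) * this
    have h2 : ∑ p ∈ antidiagonal (n + 1), (p.2 : ℝ) * cb p.2 / (2 * ((p.1 : ℝ) + 1))
        = ∑ p ∈ antidiagonal n, (((n : ℝ) + 3 / 2) * (cb p.2 / (2 * ((p.1 : ℝ) + 1)))
          - cb p.2 / 2) := by
      rw [Nat.sum_antidiagonal_succ']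
      simp only [Nat.cast_zero, zero_mul, zero_div, zero_add]
      refine sum_congr rfl fun p hp => ?_
      rw [HasAntidiagonal.mem_antidiagonal] at hp
      have : (p.1 : ℝ) + p.2 = n := by exact_mod_cast hp
      rw [cb_succ, ← this]
      push_cast
      field_simp
      ring
    have h3 : ∑ p ∈ antidiagonal (n + 1), cb p.2 = cb (n + 1) + ∑ p ∈ antidiagonal n, cb p.2 := by
      rw [Nat.sum_antidiagonal_succ]
    rw [h2, sum_sub_distrib, ← mul_sum, ih, ← sum_div, h3] at h1
    have h4 : ((n : ℝ) + 2) ≠ 0 := by positivity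
    refine mul_left_cancel₀ h4 ?_
    rw [h1, cb_succ (n + 1), oddH_succ (n + 1)]
    push_cast
    field_simp
    ring

/-- By `sum_antidiagonal_cb` the series is a double series summed along antidiagonals; its rows are
values of `betaSeries` at half-integers, that is, multiples of `π * cb k`. -/
theorem hasSum_cb_oddH_odd :
    HasSum (fun n : ℕ => cb n * oddH n / (2 * (n : ℝ) + 1)) (π / 2 * log 2) := by
  have hrow : ∀ k : ℕ, HasSum (fun m : ℕ =>
      cb m / (2 * ((k : ℝ) + 1)) / (2 * ((k : ℝ) + m) + 3))
      (π / 4 * (cb (k + 1) / ((k : ℝ) + 1))) := by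
    intro k
    have h := (hasSum_betaSeries (by positivity : 0 < ((k + 1 : ℕ) : ℝ) + 1 / 2)).mul_left
      (1 / (4 * ((k : ℝ) + 1)))
    rw [betaSeries_half_eq_mul, betaSeries_half] at h
    refine hasSum_of_eq h (fun m => ?_) (by field_simp)
    push_cast
    rw [show (m : ℝ) + (k + 1 + 1 / 2) = (2 * ((k : ℝ) + m) + 3) / 2 by ring]
    field_simp
    norm_num
  have h := hasSum_diag
    (F := fun k m : ℕ => cb m / (2 * ((k : ℝ) + 1)) / (2 * ((k : ℝ) + m) + 3))
    (hasSum_prod_of_rows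
    (F := fun k m : ℕ => cb m / (2 * ((k : ℝ) + 1)) / (2 * ((k : ℝ) + m) + 3))
    (fun k m => ?_) hrow (hasSum_cb_div.mul_left (π / 4)))
  · refine hasSum_of_succ (by simp [oddH_zero]) ?_
    refine hasSum_of_eq h (fun n => ?_) (by ring)
    rw [← sum_antidiagonal_cb, sum_div]
    refine sum_congr rfl fun p hp => ?_
    rw [HasAntidiagonal.mem_antidiagonal] at hp
    have : (p.1 : ℝ) + p.2 = n := by exact_mod_cast hp
    rw [this]
    push_cast
    ring
  · have := cb_pos m
    positivity

/-- The partial sums have a closed form, Gosper's antidifference of the summand. -/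
theorem hasSum_cb_oddH_succ :
    HasSum (fun n : ℕ => cb n * oddH n / ((n : ℝ) + 1)) 2 := by
  rw [hasSum_iff_tendsto_nat_of_nonneg]
  · have h : ∀ n : ℕ, ∑ i ∈ range (n + 1), cb i * oddH i / ((i : ℝ) + 1)
        = 2 - 2 * (cb (n + 1) * oddH (n + 1)) - 2 * cb (n + 1) := by
      intro n
      induction n with
      | zero => simp [cb_succ, cb_zero, oddH]; norm_num
      | succ n ih =>
        rw [sum_range_succ, ih, oddH_succ (n + 1), cb_succ (n + 1)]
        push_cast
        field_simp
        ring
    rw [← tendsto_add_atTop_iff_nat 1]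
    simp_rw [h]
    have h0 : Tendsto (fun n => cb n * oddH n) atTop (𝓝 0) := by
      have h1 := tendsto_oddH_sq_div.sqrt
      rw [sqrt_zero] at h1
      refine squeeze_zero (fun n => ?_) (fun n => ?_) h1
      · exact mul_nonneg (cb_pos n).le (oddH_nonneg n)
      · refine le_sqrt_of_sq_le ?_
        rcases Nat.eq_zero_or_pos n with rfl | hn
        · simp [oddH_zero]
        · have hn' : (0 : ℝ) < n := by exact_mod_cast hn
          rw [mul_pow]
          refine mul_le_mul_of_nonneg_right ?_ (sq_nonneg _)
          rw [← one_div, le_div_iff₀ hn']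
          nlinarith [cb_sq_mul_le n, sq_nonneg (cb n)]
    have h1 := (((tendsto_add_atTop_iff_nat 1).mpr h0).const_mul 2).const_sub 2
    have h2 := h1.sub (((tendsto_add_atTop_iff_nat 1).mpr cb_tendsto).const_mul 2)
    simpa using h2
  · intro n
    have := (cb_pos n).le
    have := oddH_nonneg n
    positivity

/-! ### The Tornheim-type evaluation of `∑ oddH n / (2n+1)²` -/

theorem summable_tornheim :
    Summable (fun p : ℕ × ℕ => 1 / (((p.1 : ℝ) + 1) * ((p.2 : ℝ) + 1) * ((p.1 : ℝ) + p.2 + 1))) := by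
  have hu : Summable (fun n : ℕ => 1 / (((n : ℝ) + 1) * √((n : ℝ) + 1))) := by
    have h := (summable_nat_add_iff 1).mpr
      (Real.summable_one_div_nat_rpow.mpr (by norm_num : (1 : ℝ) < 3 / 2))
    refine h.congr fun n => ?_
    push_cast
    rw [show (3 / 2 : ℝ) = 1 + 1 / 2 by norm_num, rpow_add (by positivity), rpow_one, sqrt_eq_rpow]
  refine Summable.of_nonneg_of_le (fun p => by positivity) (fun p => ?_)
    (hu.mul_of_nonneg hu (fun n => by positivity) (fun n => by positivity))
  rw [div_mul_div_comm, one_mul]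
  refine one_div_le_one_div_of_le (by positivity) ?_
  have ha : (0 : ℝ) ≤ p.1 := by positivity
  have hb : (0 : ℝ) ≤ p.2 := by positivity
  have h : √((p.1 : ℝ) + 1) * √((p.2 : ℝ) + 1) ≤ p.1 + p.2 + 1 := by
    rw [← sqrt_mul (by positivity)]
    refine sqrt_le_iff.mpr ⟨by positivity, ?_⟩
    nlinarith
  calc _ = ((p.1 : ℝ) + 1) * ((p.2 : ℝ) + 1) * (√((p.1 : ℝ) + 1) * √((p.2 : ℝ) + 1)) := by ring
    _ ≤ _ := by gcongr

theorem antitone_inv_odd : Antitone (fun n : ℕ => 1 / (2 * (n : ℝ) + 1)) := fun m n h => by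
  have : (m : ℝ) ≤ n := by exact_mod_cast h
  dsimp only
  gcongr

theorem antitone_inv_even : Antitone (fun n : ℕ => 1 / (2 * (n : ℝ) + 2)) := fun m n h => by
  have : (m : ℝ) ≤ n := by exact_mod_cast h
  dsimp only
  gcongr

theorem half_H (n : ℕ) : ∑ k ∈ range n, 1 / (2 * (k : ℝ) + 2) = H n / 2 := by
  rw [H, sum_div]
  refine sum_congr rfl fun k _ => ?_
  field_simp

/-- Partial fractions on an antidiagonal, odd by odd. -/
theorem sum_antidiagonal_odd_odd (n : ℕ) :
    ∑ p ∈ antidiagonal n, 1 / ((2 * (p.1 : ℝ) + 1) * (2 * (p.2 : ℝ) + 1))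
      = oddH (n + 1) / ((n : ℝ) + 1) := by
  have h : ∀ p ∈ antidiagonal n, 1 / ((2 * (p.1 : ℝ) + 1) * (2 * (p.2 : ℝ) + 1))
      = (1 / (2 * (p.1 : ℝ) + 1) + 1 / (2 * (p.2 : ℝ) + 1)) / (2 * ((n : ℝ) + 1)) := by
    intro p hp
    rw [HasAntidiagonal.mem_antidiagonal] at hp
    have : (p.1 : ℝ) + p.2 = n := by exact_mod_cast hp
    rw [← this]
    field_simp
    ring
  rw [sum_congr rfl h, ← sum_div, sum_add_distrib,
    Nat.sum_antidiagonal_eq_sum_range_succ (fun i _ => 1 / (2 * (i : ℝ) + 1)),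
    ← Nat.sum_antidiagonal_swap (n := n) (f := fun p => 1 / (2 * (p.2 : ℝ) + 1))]
  simp only [Prod.snd_swap]
  rw [Nat.sum_antidiagonal_eq_sum_range_succ (fun i _ => 1 / (2 * (i : ℝ) + 1)), oddH]
  field_simp
  ring

/-- Partial fractions on an antidiagonal, odd by even. -/
theorem sum_antidiagonal_odd_even (n : ℕ) :
    ∑ p ∈ antidiagonal n, 1 / ((2 * (p.1 : ℝ) + 1) * (2 * (p.2 : ℝ) + 2))
      = (oddH (n + 1) + H (n + 1) / 2) / (2 * (n : ℝ) + 3) := by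
  have h : ∀ p ∈ antidiagonal n, 1 / ((2 * (p.1 : ℝ) + 1) * (2 * (p.2 : ℝ) + 2))
      = (1 / (2 * (p.1 : ℝ) + 1) + 1 / (2 * (p.2 : ℝ) + 2)) / (2 * (n : ℝ) + 3) := by
    intro p hp
    rw [HasAntidiagonal.mem_antidiagonal] at hp
    have : (p.1 : ℝ) + p.2 = n := by exact_mod_cast hp
    rw [← this]
    have : 2 * ((p.1 : ℝ) + p.2) + 3 ≠ 0 := by positivity
    field_simp
    ring
  rw [sum_congr rfl h, ← sum_div, sum_add_distrib,
    Nat.sum_antidiagonal_eq_sum_range_succ (fun i _ => 1 / (2 * (i : ℝ) + 1)),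
    ← Nat.sum_antidiagonal_swap (n := n) (f := fun p => 1 / (2 * (p.2 : ℝ) + 2))]
  simp only [Prod.snd_swap]
  rw [Nat.sum_antidiagonal_eq_sum_range_succ (fun i _ => 1 / (2 * (i : ℝ) + 2)), oddH, half_H]

/-- The double zeta value `t(2,1)`. Both double series `∑ 1 / (x y (x + y))`, over `x, y` odd
and over `x` odd, `y` even, are summed by rows, by columns and along antidiagonals; the resulting
linear relations determine all sums involved. -/
theorem hasSum_oddH_odd_sq :
    HasSum (fun n : ℕ => oddH n / (2 * (n : ℝ) + 1) ^ 2)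
      (π ^ 2 / 8 * log 2 - 7 / 16 * zetaThree) := by
  obtain ⟨P, hP⟩ : Summable (fun p : ℕ × ℕ =>
      1 / ((2 * (p.1 : ℝ) + 1) * (2 * (p.2 : ℝ) + 1)) / (2 * ((p.1 : ℝ) + p.2) + 2)) := by
    refine Summable.of_nonneg_of_le (fun p => by positivity) (fun p => ?_) summable_tornheim
    rw [div_div]
    have ha : (0 : ℝ) ≤ p.1 := by positivity
    have hb : (0 : ℝ) ≤ p.2 := by positivity
    gcongr <;> linarith
  obtain ⟨Q, hQ⟩ : Summable (fun p : ℕ × ℕ =>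
      1 / ((2 * (p.1 : ℝ) + 1) * (2 * (p.2 : ℝ) + 2)) / (2 * ((p.1 : ℝ) + p.2) + 3)) := by
    refine Summable.of_nonneg_of_le (fun p => by positivity) (fun p => ?_) summable_tornheim
    rw [div_div]
    have ha : (0 : ℝ) ≤ p.1 := by positivity
    have hb : (0 : ℝ) ≤ p.2 := by positivity
    gcongr <;> linarith
  have hOlim := tendsto_const_div_linear 1 2 1 two_pos
  have hElim := tendsto_const_div_linear 1 2 2 two_pos
  -- For `x` odd, `y` odd: the row of `x` is a delayed alternating series divided by `x²`.
  have hV : HasSum (fun i : ℕ => H i / 2 / (2 * (i : ℝ) + 1) ^ 2) (P - log 2 * (π ^ 2 / 8)) := by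
    have hrow : ∀ i : ℕ, HasSum (fun j : ℕ =>
        1 / ((2 * (i : ℝ) + 1) * (2 * (j : ℝ) + 1)) / (2 * ((i : ℝ) + j) + 2))
        ((log 2 + H i / 2) / (2 * (i : ℝ) + 1) ^ 2) := by
      intro i
      have h := (hasSum_shift hasSum_log_two antitone_inv_even hElim i).div_const
        ((2 * (i : ℝ) + 1) ^ 2)
      rw [half_H] at h
      refine hasSum_of_eq h (fun j => ?_) rfl
      push_cast
      have : 2 * ((j : ℝ) + i) + 2 ≠ 0 := by positivity
      have : 2 * ((i : ℝ) + j) + 2 ≠ 0 := by positivity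
      field_simp
      ring
    exact hasSum_of_eq ((hP.prod_fiberwise hrow).sub (hasSum_odd_two.mul_left (log 2)))
      (fun i => by ring) rfl
  -- For `x` odd, `y` even: the row of `x` again involves the alternating series for `log 2`.
  have hT : HasSum (fun i : ℕ => oddH i / (2 * (i : ℝ) + 1) ^ 2)
      (Q + log 2 * (π ^ 2 / 8) - 7 / 8 * zetaThree) := by
    have hlog : HasSum (fun n : ℕ => 1 / (2 * (n : ℝ) + 2) - 1 / (2 * (n : ℝ) + 1)) (-log 2) :=
      hasSum_of_eq hasSum_log_two.neg (fun n => by ring) rfl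
    have hrow : ∀ i : ℕ, HasSum (fun j : ℕ =>
        1 / ((2 * (i : ℝ) + 1) * (2 * (j : ℝ) + 2)) / (2 * ((i : ℝ) + j) + 3))
        ((-log 2 + oddH (i + 1)) / (2 * (i : ℝ) + 1) ^ 2) := by
      intro i
      have h := (hasSum_shift hlog antitone_inv_odd hOlim (i + 1)).div_const
        ((2 * (i : ℝ) + 1) ^ 2)
      refine hasSum_of_eq h (fun j => ?_) rfl
      push_cast
      have : 2 * ((j : ℝ) + (i + 1)) + 1 ≠ 0 := by positivity
      have : 2 * ((i : ℝ) + j) + 3 ≠ 0 := by positivity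
      field_simp
      ring
    refine hasSum_of_eq (((hQ.prod_fiberwise hrow).add (hasSum_odd_two.mul_left (log 2))).sub
      hasSum_odd_three) (fun i => ?_) rfl
    rw [oddH_succ]
    field_simp
    ring
  -- For `x` odd, `y` even: the column of `y` is a finite sum, as `y` is a shift between odd numbers.
  have hU : HasSum (fun j : ℕ => oddH (j + 1) / (2 * (j : ℝ) + 2) ^ 2) Q := by
    have hz : HasSum (fun n : ℕ => 1 / (2 * (n : ℝ) + 1) - 1 / (2 * (n : ℝ) + 1)) 0 := by
      simp [hasSum_zero]
    refine hasSum_cols (F := fun i j : ℕ =>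
      1 / ((2 * (i : ℝ) + 1) * (2 * (j : ℝ) + 2)) / (2 * ((i : ℝ) + j) + 3)) hQ fun j => ?_
    have h := (hasSum_shift hz antitone_inv_odd hOlim (j + 1)).div_const ((2 * (j : ℝ) + 2) ^ 2)
    refine hasSum_of_eq h (fun i => ?_) (by rw [zero_add, oddH])
    push_cast
    have : 2 * ((i : ℝ) + (j + 1)) + 1 ≠ 0 := by positivity
    have : 2 * ((i : ℝ) + j) + 3 ≠ 0 := by positivity
    field_simp
    ring
  -- Summing the series over `x, y` odd by the even value of `x + y`.
  have hPQ : P = 2 * Q := by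
    have h := hasSum_diag (F := fun i j : ℕ =>
      1 / ((2 * (i : ℝ) + 1) * (2 * (j : ℝ) + 1)) / (2 * ((i : ℝ) + j) + 2)) hP
    refine h.unique (hasSum_of_eq (hU.mul_left 2) (fun n => ?_) rfl)
    rw [show 2 * (oddH (n + 1) / (2 * (n : ℝ) + 2) ^ 2)
      = oddH (n + 1) / ((n : ℝ) + 1) / (2 * (n : ℝ) + 2) by field_simp, ← sum_antidiagonal_odd_odd,
      sum_div]
    refine sum_congr rfl fun p hp => ?_
    rw [HasAntidiagonal.mem_antidiagonal] at hp
    have : (p.1 : ℝ) + p.2 = n := by exact_mod_cast hp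
    rw [this]
  -- Summing the series over `x` odd, `y` even by the odd value of `x + y`.
  have hTV : Q = P - log 2 * (π ^ 2 / 8) + (Q + log 2 * (π ^ 2 / 8) - 7 / 8 * zetaThree) := by
    have h := hasSum_diag (F := fun i j : ℕ =>
      1 / ((2 * (i : ℝ) + 1) * (2 * (j : ℝ) + 2)) / (2 * ((i : ℝ) + j) + 3)) hQ
    refine h.unique (hasSum_of_eq (hasSum_succ_of (by simp [oddH_zero, H_zero]) (hV.add hT))
      (fun n => ?_) rfl)
    push_cast
    rw [show H (n + 1) / 2 / (2 * ((n : ℝ) + 1) + 1) ^ 2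
        + oddH (n + 1) / (2 * ((n : ℝ) + 1) + 1) ^ 2
      = (oddH (n + 1) + H (n + 1) / 2) / (2 * (n : ℝ) + 3) / (2 * (n : ℝ) + 3) by
        have : 2 * ((n : ℝ) + 1) + 1 ≠ 0 := by positivity
        field_simp
        ring, ← sum_antidiagonal_odd_even, sum_div]
    refine sum_congr rfl fun p hp => ?_
    rw [HasAntidiagonal.mem_antidiagonal] at hp
    have : (p.1 : ℝ) + p.2 = n := by exact_mod_cast hp
    rw [this]
  exact hasSum_of_eq hT (fun _ => rfl) (by linarith)

/-! ### The series `∑ oddH n / ((n+1)(2n+1))` -/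

theorem sum_conv (u v : ℕ → ℝ) (N : ℕ) :
    ∑ i ∈ range N, u i * ∑ j ∈ range (N - i), v j
      = ∑ n ∈ range N, ∑ p ∈ antidiagonal n, u p.1 * v p.2 := by
  simp_rw [mul_sum]
  rw [← sum_range_diag_flip N (fun i j => u i * v j)]
  refine sum_congr rfl fun n _ => ?_
  rw [Nat.sum_antidiagonal_eq_sum_range_succ (fun i j => u i * v j)]

theorem sum_antidiagonal_H (n : ℕ) :
    ∑ p ∈ antidiagonal n, 1 / ((p.1 : ℝ) + 1) * (1 / ((p.2 : ℝ) + 1))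
      = 2 * H (n + 1) / ((n : ℝ) + 2) := by
  have h : ∀ p ∈ antidiagonal n, 1 / ((p.1 : ℝ) + 1) * (1 / ((p.2 : ℝ) + 1))
      = (1 / ((p.1 : ℝ) + 1) + 1 / ((p.2 : ℝ) + 1)) / ((n : ℝ) + 2) := by
    intro p hp
    rw [HasAntidiagonal.mem_antidiagonal] at hp
    have : (p.1 : ℝ) + p.2 = n := by exact_mod_cast hp
    rw [← this]
    have : (p.1 : ℝ) + p.2 + 2 ≠ 0 := by positivity
    field_simp
    ring
  rw [sum_congr rfl h, ← sum_div, sum_add_distrib,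
    Nat.sum_antidiagonal_eq_sum_range_succ (fun i _ => 1 / ((i : ℝ) + 1)),
    ← Nat.sum_antidiagonal_swap (n := n) (f := fun p => 1 / ((p.2 : ℝ) + 1))]
  simp only [Prod.snd_swap]
  rw [Nat.sum_antidiagonal_eq_sum_range_succ (fun i _ => 1 / ((i : ℝ) + 1)), H]
  ring

/-- The second-order harmonic number `∑_{k=1}^n 1/k²`. -/
noncomputable def H2 (n : ℕ) : ℝ := ∑ k ∈ range n, 1 / ((k : ℝ) + 1) ^ 2

/-- The sum of `1 / (x y)` over positive `x, y` with `x + y ≤ N + 1`; so the sum over the remaining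
pairs with `x, y ≤ N + 1` is exactly `H2 (N + 1)`. -/
theorem sum_inv_mul_H (N : ℕ) :
    ∑ i ∈ range N, 1 / ((i : ℝ) + 1) * H (N - i) = H (N + 1) ^ 2 - H2 (N + 1) := by
  have h := sum_conv (fun i => 1 / ((i : ℝ) + 1)) (fun i => 1 / ((i : ℝ) + 1)) N
  simp_rw [sum_antidiagonal_H] at h
  refine h.trans ?_
  induction N with
  | zero => simp [H, H2]
  | succ N ih =>
    rw [sum_range_succ, ih (sum_conv _ _ N |>.trans (by simp_rw [sum_antidiagonal_H])), H2, H2,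
      sum_range_succ _ (N + 1), H_succ (N + 1)]
    push_cast
    field_simp
    ring

/-- The sum of `1 / (x y)` over odd `x, y < 2N` with `x + y > 2N`. -/
noncomputable def oddCorner (N : ℕ) : ℝ :=
  ∑ i ∈ range N, 1 / (2 * (i : ℝ) + 1) * (oddH N - oddH (N - i))

/-- The pairs with `x + y ≤ 2N` are summed along antidiagonals, by partial fractions. -/
theorem oddCorner_eq (N : ℕ) :
    oddCorner N = oddH N ^ 2 - ∑ n ∈ range N, oddH (n + 1) / ((n : ℝ) + 1) := by
  have h := sum_conv (fun i => 1 / (2 * (i : ℝ) + 1)) (fun i => 1 / (2 * (i : ℝ) + 1)) N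
  simp_rw [one_div_mul_one_div, sum_antidiagonal_odd_odd] at h
  rw [← h, oddCorner]
  simp_rw [mul_sub]
  rw [sum_sub_distrib, ← sum_mul, sq]
  rfl

/-- Comparison with the same corner sum over even numbers, where the outer factor `1/x` and the
inner interval sums of `1/y` are both smaller. -/
theorem oddCorner_lower (N : ℕ) :
    (H2 (N + 1) - (H (N + 1) ^ 2 - H N ^ 2)) / 4 ≤ oddCorner N := by
  have hmono : Monotone (fun n => oddH n - H n / 2) := by
    refine monotone_nat_of_le_succ fun n => ?_
    rw [oddH_succ, H_succ]
    have : 1 / ((n : ℝ) + 1) / 2 ≤ 1 / (2 * (n : ℝ) + 1) := by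
      rw [div_div]
      gcongr
      linarith
    linarith
  have h : (H2 (N + 1) - (H (N + 1) ^ 2 - H N ^ 2)) / 4
      = ∑ i ∈ range N, 1 / (2 * (i : ℝ) + 2) * ((H N - H (N - i)) / 2) := by
    have h1 : ∀ i ∈ range N, 1 / (2 * (i : ℝ) + 2) * ((H N - H (N - i)) / 2)
        = (1 / ((i : ℝ) + 1) * H N - 1 / ((i : ℝ) + 1) * H (N - i)) / 4 := fun i _ => by
      field_simp
      ring
    rw [sum_congr rfl h1, ← sum_div, sum_sub_distrib, sum_inv_mul_H, ← sum_mul]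
    change _ = (H N * H N - _) / 4
    ring
  rw [h, oddCorner]
  refine sum_le_sum fun i _ => ?_
  have h2 : (H N - H (N - i)) / 2 ≤ oddH N - oddH (N - i) := by
    have := hmono (Nat.sub_le N i)
    dsimp only at this
    linarith
  have h3 : 0 ≤ oddH N - oddH (N - i) := by
    rw [sub_nonneg]
    exact monotone_nat_of_le_succ (fun n => by rw [oddH_succ]; simp; positivity) (Nat.sub_le N i)
  calc _ ≤ 1 / (2 * (i : ℝ) + 2) * (oddH N - oddH (N - i)) := by gcongr
    _ ≤ _ := by
      refine mul_le_mul_of_nonneg_right ?_ h3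
      gcongr
      norm_num

/-- Comparison with a corner sum over even numbers, where shifting every odd number down by one
enlarges both factors. The row `x = 1` of `oddCorner` is empty, so the shift is legitimate. -/
theorem oddCorner_upper (N : ℕ) : oddCorner (N + 2) ≤ H2 (N + 1) / 4 := by
  have hanti : Antitone (fun n => oddH (n + 1) - H n / 2) := by
    refine antitone_nat_of_succ_le fun n => ?_
    rw [oddH_succ (n + 1), H_succ]
    push_cast
    have : 1 / (2 * ((n : ℝ) + 1) + 1) ≤ 1 / ((n : ℝ) + 1) / 2 := by
      rw [div_div]
      gcongr
      linarith
    linarith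
  have h : H2 (N + 1) / 4
      = ∑ i ∈ range (N + 1), 1 / (2 * (i : ℝ) + 2) * ((H (N + 1) - H (N - i)) / 2) := by
    have h1 : ∀ i ∈ range (N + 1), 1 / (2 * (i : ℝ) + 2) * ((H (N + 1) - H (N - i)) / 2)
        = (1 / ((i : ℝ) + 1) * H (N + 1) - 1 / ((i : ℝ) + 1) * H (N - i)) / 4 := fun i _ => by
      field_simp
      ring
    rw [sum_congr rfl h1, ← sum_div, sum_sub_distrib, ← sum_mul,
      sum_range_succ (fun i : ℕ => 1 / ((i : ℝ) + 1) * H (N - i)), sum_inv_mul_H]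
    change _ = (H (N + 1) * H (N + 1) - _) / 4
    simp [H_zero]
    ring
  rw [h, oddCorner, sum_range_succ']
  simp only [Nat.sub_zero, sub_self, mul_zero, add_zero]
  refine sum_le_sum fun i hi => ?_
  rw [mem_range] at hi
  have h2 : oddH (N + 2) - oddH (N + 2 - (i + 1)) ≤ (H (N + 1) - H (N - i)) / 2 := by
    have := hanti (show N - i ≤ N + 1 by omega)
    dsimp only at this
    rw [show N + 2 - (i + 1) = N - i + 1 by omega]
    linarith
  have h3 : 0 ≤ oddH (N + 2) - oddH (N + 2 - (i + 1)) := by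
    rw [sub_nonneg]
    exact monotone_nat_of_le_succ (fun n => by rw [oddH_succ]; simp; positivity) (Nat.sub_le _ _)
  calc _ ≤ 1 / (2 * (i : ℝ) + 2) * (oddH (N + 2) - oddH (N + 2 - (i + 1))) := by
        refine mul_le_mul_of_nonneg_right ?_ h3
        push_cast
        refine one_div_le_one_div_of_le (by positivity) ?_
        linarith
    _ ≤ _ := by gcongr

theorem tendsto_H2 : Tendsto H2 atTop (𝓝 (π ^ 2 / 6)) := hasSum_zeta_two_succ.tendsto_sum_nat

theorem tendsto_oddCorner : Tendsto oddCorner atTop (𝓝 (π ^ 2 / 24)) := by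
  have h2 : Tendsto (fun N => H2 (N + 1)) atTop (𝓝 (π ^ 2 / 6)) :=
    (tendsto_add_atTop_iff_nat 1).mpr tendsto_H2
  have hsq : Tendsto (fun N => H (N + 1) ^ 2 - H N ^ 2) atTop (𝓝 0) := by
    have h1 := (tendsto_add_atTop_iff_nat 1).mpr tendsto_H_div
    have h3 := (h1.const_mul 2).sub ((tendsto_const_div_linear 1 1 1 one_pos).pow 2)
    simp only [mul_zero, ne_eq, OfNat.ofNat_ne_zero, not_false_eq_true, zero_pow, sub_zero] at h3
    refine h3.congr fun N => ?_
    rw [H_succ]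
    push_cast
    field_simp
    ring
  have hlow := (tendsto_add_atTop_iff_nat 2).mpr ((h2.sub hsq).div_const 4)
  have hup := h2.div_const 4
  rw [← tendsto_add_atTop_iff_nat 2]
  rw [show (π ^ 2 / 6 - 0) / 4 = π ^ 2 / 24 by ring] at hlow
  rw [show π ^ 2 / 6 / 4 = π ^ 2 / 24 by ring] at hup
  exact tendsto_of_tendsto_of_tendsto_of_le_of_le hlow hup
    (fun N => oddCorner_lower (N + 2)) oddCorner_upper

/-- Up to elementary convergent series, the partial sums are the corner sums `oddCorner N`. -/
theorem hasSum_oddH_mixed :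
    HasSum (fun n : ℕ => oddH n / (((n : ℝ) + 1) * (2 * (n : ℝ) + 1)))
      (2 * log 2 - π ^ 2 / 12) := by
  rw [hasSum_iff_tendsto_nat_of_nonneg]
  · have h : ∀ N : ℕ, ∑ n ∈ range N, oddH n / (((n : ℝ) + 1) * (2 * (n : ℝ) + 1))
        = oddCorner N - ∑ n ∈ range N, 1 / (2 * (n : ℝ) + 1) ^ 2
          + 2 * ∑ n ∈ range N, (1 / (2 * (n : ℝ) + 1) - 1 / (2 * (n : ℝ) + 2)) := by
      intro N
      simp_rw [oddCorner_eq]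
      induction N with
      | zero => simp [oddH_zero]
      | succ N ih =>
        rw [sum_range_succ, ih]
        simp only [sum_range_succ _ N]
        rw [oddH_succ]
        field_simp
        ring
    simp_rw [h]
    have h1 := (tendsto_oddCorner.sub hasSum_odd_two.tendsto_sum_nat).add
      (hasSum_log_two.tendsto_sum_nat.const_mul 2)
    rw [show π ^ 2 / 24 - π ^ 2 / 8 + 2 * log 2 = 2 * log 2 - π ^ 2 / 12 by ring] at h1
    exact h1
  · intro n
    have := oddH_nonneg n
    positivity

/-! ### Assembling the series -/

theorem doubleFactorial_ratio (n : ℕ) :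
    (Nat.doubleFactorial (2 * n) : ℝ) / (Nat.doubleFactorial (2 * n + 1) : ℝ)
      = 1 / (cb n * (2 * (n : ℝ) + 1)) := by
  induction n with
  | zero => simp [cb_zero]
  | succ n ih =>
    rw [show 2 * (n + 1) = 2 * n + 2 by ring, show 2 * n + 2 + 1 = 2 * n + 1 + 2 by ring,
      Nat.doubleFactorial_add_two, Nat.doubleFactorial_add_two, cb_succ]
    push_cast
    rw [mul_div_mul_comm, ih]
    have := cb_pos n
    field_simp
    ring

theorem stmt_7 :
    ∑' n : ℕ,
        (C (n + 1) * (H (2 * (n + 1)) - (1 / 2) * H (n + 1)) /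
          (4 ^ (n + 1) * (2 * ((n : ℝ) + 1) + 1))) *
        (π / 2 - (Nat.doubleFactorial (2 * (n + 1)) : ℝ) /
          (Nat.doubleFactorial (2 * (n + 1) + 1) : ℝ))
      = 2 * Real.log 2 + (7 / 8) * zetaThree +
        (π / 12) * (-12 + π * (-1 + Real.log 8)) := by
  have h := (((hasSum_cb_oddH_odd.mul_left 2).sub hasSum_cb_oddH_succ).mul_left (π / 2)).sub
    ((hasSum_oddH_odd_sq.mul_left 2).sub hasSum_oddH_mixed)
  refine (hasSum_of_eq (hasSum_succ_of (by simp [oddH_zero]) h) (fun n => ?_) ?_).tsum_eq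
  · have hC : C (n + 1) / 4 ^ (n + 1) = cb (n + 1) / ((n : ℝ) + 2) := by
      unfold C cb Nat.centralBinom
      push_cast
      rw [show (n : ℝ) + 1 + 1 = n + 2 by ring]
      field_simp
    have hc := cb_pos (n + 1)
    rw [doubleFactorial_ratio, H_two_mul, ← div_div, mul_div_right_comm, hC]
    push_cast
    rw [show (n : ℝ) + 1 + 1 = n + 2 by ring]
    field_simp
    ring
  · rw [show (8 : ℝ) = 2 ^ 3 by norm_num, log_pow]
    push_cast
    ring
end
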